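/- Consider a normal form game with nonempty player set N, strategy sets S_i and real-valued payoff functions u_i : ∏_j S_j → ℝ. Assume that for every i ∈ N: (1) S_i is a nonempty lattice equipped with a topology τ_i that is finer than the interval topology on S_i and is compact; (2) for every s_{-i} ∈ S_{-i}, the section u_i(·, s_{-i}) : S_i → ℝ is upper semicontinuous with respect to τ_i; (3) for every s_{-i} ∈ S_{-i}, the section u_i(·, s_{-i}) is supermodular, i.e., u_i(a, s_{-i}) + u_i(b, s_{-i}) ≤ u_i(a ⊓ b, s_{-i}) + u_i(a ⊔ b, s_{-i}) for all a, b ∈ S_i; (4) u_i has increasing differences in S_i and S_{-i}, i.e., for all a ≤ a' in S_i and t ≤ t' in S_{-i} (product order), u_i(a', t) − u_i(a, t) ≤ u_i(a', t') − u_i(a, t'). Then the set E of Nash equilibria is nonempty and is a complete lattice in the order induced from the product order on ∏_j S_j: every subset A ⊆ E has a least upper bound in E and a greatest lower bound in E. -/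

import Mathlib

open Classical in
/-- Combine a strategy `a` of player `i` with a joint strategy `t` of the other players
into a joint strategy of all players. -/
noncomputable def combine {N : Type*} {S : N → Type*} (i : N) (a : S i)
    (t : ∀ j : {j : N // j ≠ i}, S j.1) : ∀ j, S j :=
  fun j => if h : j = i then cast (congrArg S h.symm) a else t ⟨j, h⟩

/-- A joint strategy `x` is a Nash equilibrium: no player `i` can improve the payoff
`u i x` by a unilateral deviation `y`. -/
def IsNashEquilibrium {N : Type*} {S : N → Type*}
    (u : ∀ _ : N, (∀ j, S j) → ℝ) (x : ∀ j, S j) : Prop :=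
  ∀ i, ∀ y : S i, u i (combine i y (fun j => x j.1)) ≤ u i x

/-- The interval topology on a poset: closed sets are generated by the closed rays
`{x | x ≤ a}` and `{x | a ≤ x}`, i.e., the topology is generated by their complements. -/
def intervalTopology (P : Type*) [Preorder P] : TopologicalSpace P :=
  TopologicalSpace.generateFrom
    ({s | ∃ a : P, s = {x | x ≤ a}ᶜ} ∪ {s | ∃ a : P, s = {x | a ≤ x}ᶜ})

/-!
Supermodularity and increasing differences make the joint best-reply correspondence `F` ascend in
the strong set order, while compactness makes every strategy lattice complete and every set of best
replies a nonempty subcomplete sublattice. Equilibria are the fixed points of `F`. Given a set `A`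
of fixed points, put `a = sSup A` and let `f x` be the least element of `F (x ⊔ a)` above `a`: it
exists because the greatest element of `F (x ⊔ a)` dominates each `y ∈ F y` with `y ∈ A`. The map
`f` is monotone, and its least fixed point is the least fixed point of `F` above `A`.
-/

section CompactOrder

theorem closedIicTopology_of_le_intervalTopology {α : Type*} [Preorder α] [τ : TopologicalSpace α]
    (h : τ ≤ intervalTopology α) : ClosedIicTopology α where
  isClosed_Iic a :=
    ⟨h _ (TopologicalSpace.isOpen_generateFrom_of_mem (Or.inl ⟨a, rfl⟩))⟩

theorem closedIciTopology_of_le_intervalTopology {α : Type*} [Preorder α] [τ : TopologicalSpace α]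
    (h : τ ≤ intervalTopology α) : ClosedIciTopology α where
  isClosed_Ici a :=
    ⟨h _ (TopologicalSpace.isOpen_generateFrom_of_mem (Or.inr ⟨a, rfl⟩))⟩

variable {α : Type*} [TopologicalSpace α]

theorem exists_mem_isLUB_of_directedOn [Preorder α] [ClosedIciTopology α] [ClosedIicTopology α]
    {C D : Set α} (hC : IsCompact C) (hDC : D ⊆ C) (hne : D.Nonempty)
    (hD : DirectedOn (· ≤ ·) D) : ∃ s ∈ C, IsLUB D s := by
  have : Nonempty D := hne.to_subtype
  have : IsDirectedOrder D := directedOn_iff_isDirectedOrder.1 hD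
  obtain ⟨s, hsC, hs⟩ : ∃ s ∈ C, MapClusterPt s Filter.atTop ((↑) : D → α) :=
    hC.exists_mapClusterPt (Filter.tendsto_principal.2 (.of_forall fun d => hDC d.2))
  refine ⟨s, hsC, fun d hd => ?_, fun b hb => ?_⟩
  · exact isClosed_Ici.mem_of_mapClusterPt hs (Filter.eventually_ge_atTop (⟨d, hd⟩ : D))
  · exact isClosed_Iic.mem_of_mapClusterPt hs (.of_forall fun d => hb d.2)

theorem exists_mem_isLUB_of_supClosed [SemilatticeSup α] [ClosedIciTopology α]
    [ClosedIicTopology α] {C A : Set α} (hC : IsCompact C) (hsup : SupClosed C) (hAC : A ⊆ C)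
    (hA : A.Nonempty) : ∃ s ∈ C, IsLUB A s := by
  simpa only [isLUB_supClosure] using
    exists_mem_isLUB_of_directedOn hC (supClosure_min hAC hsup) (hA.mono subset_supClosure)
      supClosed_supClosure.directedOn

theorem exists_mem_isGLB_of_infClosed [SemilatticeInf α] [ClosedIciTopology α]
    [ClosedIicTopology α] {C A : Set α} (hC : IsCompact C) (hinf : InfClosed C) (hAC : A ⊆ C)
    (hA : A.Nonempty) : ∃ s ∈ C, IsGLB A s :=
  exists_mem_isLUB_of_supClosed (α := αᵒᵈ) hC hinf hAC hA

theorem exists_isLUB_of_compactSpace [Lattice α] [Nonempty α] [CompactSpace α]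
    [ClosedIciTopology α] [ClosedIicTopology α] (A : Set α) : ∃ s, IsLUB A s := by
  rcases A.eq_empty_or_nonempty with rfl | hA
  · obtain ⟨s, -, hs⟩ := exists_mem_isGLB_of_infClosed isCompact_univ infClosed_univ
      (Set.subset_univ _) (Set.univ_nonempty (α := α))
    exact ⟨s, isLUB_empty_iff.2 fun x => hs.1 (Set.mem_univ x)⟩
  · obtain ⟨s, -, hs⟩ := exists_mem_isLUB_of_supClosed isCompact_univ supClosed_univ
      (Set.subset_univ _) hA
    exact ⟨s, hs⟩

/-- The complete lattice on a lattice all of whose subsets have a least upper bound. In contrast to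
`completeLatticeOfSup`, it keeps the given binary operations. -/
noncomputable abbrev completeLatticeOfExistsIsLUB {α : Type*} [Lattice α]
    (h : ∀ A : Set α, ∃ s, IsLUB A s) : CompleteLattice α :=
  letI : SupSet α := ⟨fun A => (h A).choose⟩
  { __ := ‹Lattice α›
    __ := completeLatticeOfSup α fun A => (h A).choose_spec }

end CompactOrder

section Subcomplete

/-- A subcomplete set of a complete lattice contains the supremum and the infimum, computed in the
ambient lattice, of each of its nonempty subsets. Unlike a `CompleteSublattice`, it need not contain
`⊥` and `⊤`. -/
def IsSubcomplete {α : Type*} [CompleteLattice α] (C : Set α) : Prop :=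
  ∀ A ⊆ C, A.Nonempty → sSup A ∈ C ∧ sInf A ∈ C

theorem isSubcomplete_of_isCompact {α : Type*} [CompleteLattice α] [TopologicalSpace α]
    [ClosedIciTopology α] [ClosedIicTopology α] {C : Set α} (hC : IsCompact C)
    (hsup : SupClosed C) (hinf : InfClosed C) : IsSubcomplete C := by
  intro A hAC hA
  obtain ⟨s, hsC, hs⟩ := exists_mem_isLUB_of_supClosed hC hsup hAC hA
  obtain ⟨m, hmC, hm⟩ := exists_mem_isGLB_of_infClosed hC hinf hAC hA
  exact ⟨hs.sSup_eq ▸ hsC, hm.sInf_eq ▸ hmC⟩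

theorem IsSubcomplete.pi {ι : Type*} {α : ι → Type*} [∀ i, CompleteLattice (α i)]
    {C : ∀ i, Set (α i)} (hC : ∀ i, IsSubcomplete (C i)) : IsSubcomplete (Set.univ.pi C) := by
  intro A hAC hA
  have hcoord (i : ι) : sSup (Function.eval i '' A) ∈ C i ∧ sInf (Function.eval i '' A) ∈ C i :=
    hC i _ (Set.image_subset_iff.2 fun x hx => hAC hx i trivial) (hA.image _)
  simp only [Set.mem_univ_pi, sSup_apply_eq_sSup_image, sInf_apply_eq_sInf_image]
  exact ⟨fun i => (hcoord i).1, fun i => (hcoord i).2⟩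

end Subcomplete

section StrongSetOrder

/-- Veinott's strong set order, by which values of correspondences between lattices are compared.
It is not reflexive: `StrongSetLE s s` says that `s` is a sublattice. -/
def StrongSetLE {α : Type*} [Lattice α] (s t : Set α) : Prop :=
  ∀ ⦃a⦄, a ∈ s → ∀ ⦃b⦄, b ∈ t → a ⊓ b ∈ s ∧ a ⊔ b ∈ t

namespace StrongSetLE

theorem supClosed {α : Type*} [Lattice α] {s : Set α} (h : StrongSetLE s s) : SupClosed s :=
  fun _ ha _ hb => (h ha hb).2

theorem infClosed {α : Type*} [Lattice α] {s : Set α} (h : StrongSetLE s s) : InfClosed s :=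
  fun _ ha _ hb => (h ha hb).1

theorem pi {ι : Type*} {α : ι → Type*} [∀ i, Lattice (α i)] {s t : ∀ i, Set (α i)}
    (h : ∀ i, StrongSetLE (s i) (t i)) : StrongSetLE (Set.univ.pi s) (Set.univ.pi t) :=
  fun _ ha _ hb => ⟨fun i _ => (h i (ha i trivial) (hb i trivial)).1,
    fun i _ => (h i (ha i trivial) (hb i trivial)).2⟩

theorem sInf_inter_Ici_le {α : Type*} [CompleteLattice α] {s t : Set α} {a : α}
    (h : StrongSetLE s t) (hs : sInf (s ∩ Set.Ici a) ∈ s) :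
    sInf (s ∩ Set.Ici a) ≤ sInf (t ∩ Set.Ici a) := by
  refine le_sInf fun z hz => ?_
  have ha : a ≤ sInf (s ∩ Set.Ici a) := le_sInf fun _ hy => hy.2
  have hmem : sInf (s ∩ Set.Ici a) ⊓ z ∈ s ∩ Set.Ici a := ⟨(h hs hz.1).1, le_inf ha hz.2⟩
  exact (sInf_le hmem).trans inf_le_right

end StrongSetLE

end StrongSetOrder

section FixedPoints

/-- `E` is a complete lattice in the induced order. The bounds are taken within `E` and may differ
from those of the ambient order. -/
def IsCompleteLatticeOn {α : Type*} [Preorder α] (E : Set α) : Prop :=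
  ∀ A ⊆ E, (∃ s, IsLeast (E ∩ upperBounds A) s) ∧ ∃ m, IsGreatest (E ∩ lowerBounds A) m

theorem IsCompleteLatticeOn.of_exists_isLeast {α : Type*} [Preorder α] {E : Set α}
    (h : ∀ A ⊆ E, ∃ s, IsLeast (E ∩ upperBounds A) s) : IsCompleteLatticeOn E := by
  refine fun A hA => ⟨h A hA, ?_⟩
  obtain ⟨m, ⟨hmE, hm⟩, hleast⟩ := h (E ∩ lowerBounds A) Set.inter_subset_left
  exact ⟨m, ⟨hmE, fun x hx => hleast ⟨hA hx, fun _ hb => hb.2 hx⟩⟩, hm⟩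

theorem IsCompleteLatticeOn.nonempty {α : Type*} [Preorder α] {E : Set α}
    (hE : IsCompleteLatticeOn E) : E.Nonempty := by
  obtain ⟨⟨s, hs⟩, -⟩ := hE ∅ (Set.empty_subset E)
  exact ⟨s, hs.1.1⟩

variable {α : Type*} [CompleteLattice α] {F : α → Set α}

theorem nonempty_inter_Ici_sSup_of_ascending
    (hasc : ∀ ⦃x y⦄, x ≤ y → StrongSetLE (F x) (F y)) {A : Set α} (hA : A ⊆ {x | x ∈ F x})
    {x : α} (hx : sSup A ≤ x) (htop : sSup (F x) ∈ F x) : (F x ∩ Set.Ici (sSup A)).Nonempty := by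
  refine ⟨sSup (F x), htop, sSup_le fun y hy => ?_⟩
  have hyx : y ≤ x := (le_sSup hy).trans hx
  exact le_sup_left.trans (le_sSup (hasc hyx (hA hy) htop).2)

theorem exists_isLeast_fixedPoints_inter_upperBounds
    (hasc : ∀ ⦃x y⦄, x ≤ y → StrongSetLE (F x) (F y)) (hne : ∀ x, (F x).Nonempty)
    (hsub : ∀ x, IsSubcomplete (F x)) {A : Set α} (hA : A ⊆ {x | x ∈ F x}) :
    ∃ s, IsLeast ({x | x ∈ F x} ∩ upperBounds A) s := by
  let a := sSup A
  have hmem (x : α) : sInf (F (x ⊔ a) ∩ Set.Ici a) ∈ F (x ⊔ a) :=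
    (hsub _ _ Set.inter_subset_left (nonempty_inter_Ici_sSup_of_ascending hasc hA le_sup_right
      (hsub _ _ subset_rfl (hne _)).1)).2
  let f : α →o α :=
    { toFun x := sInf (F (x ⊔ a) ∩ Set.Ici a)
      monotone' x _ hxy := (hasc (sup_le_sup_right hxy a)).sInf_inter_Ici_le (hmem x) }
  have ha : a ≤ f.lfp := f.map_lfp ▸ le_sInf fun _ hz => hz.2
  have hfix : f.lfp ∈ F f.lfp := by
    have h : f f.lfp ∈ F (f.lfp ⊔ a) := hmem f.lfp
    rwa [f.map_lfp, sup_eq_left.2 ha] at h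
  refine ⟨f.lfp, ⟨hfix, fun x hx => (le_sSup hx).trans ha⟩, fun b ⟨hb, hbA⟩ => ?_⟩
  have hab : a ≤ b := sSup_le hbA
  refine f.lfp_le (sInf_le ⟨?_, hab⟩)
  rwa [sup_eq_left.2 hab]

theorem isCompleteLatticeOn_fixedPoints_of_ascending
    (hasc : ∀ ⦃x y⦄, x ≤ y → StrongSetLE (F x) (F y)) (hne : ∀ x, (F x).Nonempty)
    (hsub : ∀ x, IsSubcomplete (F x)) : IsCompleteLatticeOn {x | x ∈ F x} :=
  .of_exists_isLeast fun _ => exists_isLeast_fixedPoints_inter_upperBounds hasc hne hsub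

end FixedPoints

section Maximizers

/-- The set of global maximizers of `v`. -/
def maximizers {α β : Type*} [LE β] (v : α → β) : Set α :=
  {a | ∀ b, v b ≤ v a}

theorem isClosed_maximizers {α β : Type*} [TopologicalSpace α] [LinearOrder β]
    {v : α → β} (hv : UpperSemicontinuous v) : IsClosed (maximizers v) := by
  have : maximizers v = ⋂ b, v ⁻¹' Set.Ici (v b) := by
    ext a
    simp only [maximizers, Set.mem_ofPred_eq, Set.mem_iInter, Set.mem_preimage, Set.mem_Ici]
  exact this ▸ isClosed_iInter fun b => hv.isClosed_preimage (v b)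

theorem maximizers_nonempty {α β : Type*} [TopologicalSpace α]
    [CompactSpace α] [Nonempty α] [LinearOrder β] {v : α → β} (hv : UpperSemicontinuous v) :
    (maximizers v).Nonempty := by
  obtain ⟨a, -, ha⟩ := (hv.upperSemicontinuousOn Set.univ).exists_isMaxOn Set.univ_nonempty
    isCompact_univ
  exact ⟨a, fun b => ha (Set.mem_univ b)⟩

theorem strongSetLE_maximizers {α R : Type*} [Lattice α] [AddCommGroup R] [PartialOrder R]
    [IsOrderedAddMonoid R] {v w : α → R} (hsm : ∀ a b, v a + v b ≤ v (a ⊓ b) + v (a ⊔ b))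
    (hid : ∀ a b, a ≤ b → v b - v a ≤ w b - w a) :
    StrongSetLE (maximizers v) (maximizers w) := by
  intro a ha b hb
  have hdiff : v (a ⊔ b) - v b ≤ w (a ⊔ b) - w b := hid b (a ⊔ b) le_sup_right
  have hv : v a - v (a ⊓ b) ≤ v (a ⊔ b) - v b := by
    rw [sub_le_sub_iff, add_comm (v (a ⊔ b))]
    exact hsm a b
  have hinf : v a ≤ v (a ⊓ b) :=
    sub_nonpos.1 (hv.trans (hdiff.trans (sub_nonpos.2 (hb (a ⊔ b)))))
  have hsup : w b ≤ w (a ⊔ b) :=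
    sub_nonneg.1 ((sub_nonneg.2 (ha (a ⊓ b))).trans (hv.trans hdiff))
  exact ⟨fun c => (ha c).trans hinf, fun c => (hb c).trans hsup⟩

end Maximizers

section Game

variable {N : Type*} {S : N → Type*}

theorem combine_self (i : N) (x : ∀ j, S j) : combine i (x i) (fun j => x j.1) = x := by
  funext j
  by_cases h : j = i
  · subst h
    simp only [combine, dite_true, cast_eq]
  · simp only [combine, h, dite_false]

/-- The joint best-reply correspondence: in a joint strategy of `bestReplies u x`, every player
replies optimally to the strategies of the others in `x`. -/
def bestReplies (u : N → (∀ j, S j) → ℝ) (x : ∀ j, S j) : Set (∀ j, S j) :=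
  Set.univ.pi fun i => maximizers fun a => u i (combine i a fun j => x j.1)

theorem isNashEquilibrium_iff_mem_bestReplies {u : N → (∀ j, S j) → ℝ} {x : ∀ j, S j} :
    IsNashEquilibrium u x ↔ x ∈ bestReplies u x := by
  simp only [IsNashEquilibrium, bestReplies, maximizers, Set.mem_univ_pi, Set.mem_ofPred_eq,
    combine_self]

end Game

/-- Corollary 4.12 (Zhou's theorem): for a normal form game with real-valued payoffs,
if every strategy lattice carries a compact topology finer than its interval topology,
every section of a payoff function is upper semicontinuous and supermodular, and the
payoff functions have increasing differences, then the Nash equilibria form a nonempty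
complete lattice: every set of Nash equilibria has a least upper bound and a greatest
lower bound among the Nash equilibria. -/
theorem zhou_nashEquilibria_nonempty_completeLattice {N : Type*} [Nonempty N]
    {S : N → Type*} [∀ i, Lattice (S i)] [∀ i, Nonempty (S i)]
    (τ : ∀ i, TopologicalSpace (S i))
    (hfiner : ∀ i, τ i ≤ intervalTopology (S i))
    (hcompact : ∀ i, @CompactSpace (S i) (τ i))
    (u : ∀ _ : N, (∀ j, S j) → ℝ)
    (husc : ∀ i, ∀ t : ∀ j : {j : N // j ≠ i}, S j.1, ∀ r : ℝ,
      @IsClosed (S i) (τ i) {a : S i | r ≤ u i (combine i a t)})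
    (hsm : ∀ i, ∀ t : ∀ j : {j : N // j ≠ i}, S j.1, ∀ a b : S i,
      u i (combine i a t) + u i (combine i b t) ≤
        u i (combine i (a ⊓ b) t) + u i (combine i (a ⊔ b) t))
    (hid : ∀ i, ∀ a a' : S i, a ≤ a' → ∀ t t' : (∀ j : {j : N // j ≠ i}, S j.1), t ≤ t' →
      u i (combine i a' t) - u i (combine i a t) ≤
        u i (combine i a' t') - u i (combine i a t')) :
    (∃ x : ∀ j, S j, IsNashEquilibrium u x) ∧
    ∀ A : Set (∀ j, S j), (∀ x ∈ A, IsNashEquilibrium u x) →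
      (∃ s : ∀ j, S j, IsNashEquilibrium u s ∧ (∀ x ∈ A, x ≤ s) ∧
        ∀ b : ∀ j, S j, IsNashEquilibrium u b → (∀ x ∈ A, x ≤ b) → s ≤ b) ∧
      (∃ m : ∀ j, S j, IsNashEquilibrium u m ∧ (∀ x ∈ A, m ≤ x) ∧
        ∀ b : ∀ j, S j, IsNashEquilibrium u b → (∀ x ∈ A, b ≤ x) → b ≤ m) := by
  have (i : N) : ClosedIicTopology (S i) := closedIicTopology_of_le_intervalTopology (hfiner i)
  have (i : N) : ClosedIciTopology (S i) := closedIciTopology_of_le_intervalTopology (hfiner i)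
  let _ (i : N) : CompleteLattice (S i) := completeLatticeOfExistsIsLUB exists_isLUB_of_compactSpace
  have husc' (i : N) (x : ∀ j, S j) :
      UpperSemicontinuous fun a => u i (combine i a fun j => x j.1) :=
    upperSemicontinuous_iff_isClosed_preimage.2 (husc i _)
  have hasc (i : N) {x y : ∀ j, S j} (hxy : x ≤ y) :
      StrongSetLE (maximizers fun a => u i (combine i a fun j => x j.1))
        (maximizers fun a => u i (combine i a fun j => y j.1)) :=
    strongSetLE_maximizers (hsm i _) fun a b hab => hid i a b hab _ _ fun j => hxy j.1
  have hE : IsCompleteLatticeOn {x | IsNashEquilibrium u x} := by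
    simp only [isNashEquilibrium_iff_mem_bestReplies]
    exact isCompleteLatticeOn_fixedPoints_of_ascending (fun x y hxy => .pi fun i => hasc i hxy)
      (fun x => Set.univ_pi_nonempty_iff.2 fun i => maximizers_nonempty (husc' i x))
      fun x => .pi fun i => isSubcomplete_of_isCompact (isClosed_maximizers (husc' i x)).isCompact
        (hasc i le_rfl).supClosed (hasc i le_rfl).infClosed
  refine ⟨hE.nonempty, fun A hA => ?_⟩
  obtain ⟨⟨s, hs, hsleast⟩, m, hm, hmgreatest⟩ := hE A hA
  exact ⟨⟨s, hs.1, fun _ hx => hs.2 hx, fun _ hb hbA => hsleast ⟨hb, fun _ hx => hbA _ hx⟩⟩,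
    m, hm.1, fun _ hx => hm.2 hx, fun _ hb hbA => hmgreatest ⟨hb, fun _ hx => hbA _ hx⟩⟩
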